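/- For every integer d ≥ 1 there is a function f : ℕ → ℕ with f(p)/p → 0 as p → ∞ such that: every finite set of n points in ℝ^d and every positive integer p admit a partition of the point set into at most p subsets, each of size at most ⌈2n/p⌉, such that every hyperplane in ℝ^d cuts at most f(p) of the subsets. -/

import Mathlib

noncomputable section

/-- The hyperplane given as the zero set of the nonconstant affine functional `f`
cuts a point set `S` if both open halfspaces bounded by it contain a point of `S`. -/
def Cuts {d : ℕ} (f : (Fin d → ℝ) →ᵃ[ℝ] ℝ) (S : Finset (Fin d → ℝ)) : Prop :=
  (∃ x ∈ S, 0 < f x) ∧ (∃ x ∈ S, f x < 0)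

/-!
The main step is that every finite set has boundedly many subsets, each containing a fixed
proportion of its points, such that every functional has constant weak sign on one of them. It is
proved for all finite-dimensional spaces of functions, by induction on the dimension: after dividing
by one function, the constant `1` is available, and for another function `b` the points below the
median of `b` are paired with points above it. The differences along the pairs, and the convex
combinations on which `b` takes its median value, both range over spaces of smaller dimension, and
together they control the signs at the endpoints.

Splitting off disjoint blocks of equal size from such subsets, as long as enough points are left,
packs almost all points with blocks of which every hyperplane misses a fixed proportion. Iterating
this inside the blocks makes the proportion of cut blocks arbitrarily small. The points left over
are divided arbitrarily; the factor `2` in the size bound leaves room for these additional parts.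
-/

open Finset Module

section UncutFamilies

variable {α β Q : Type*} {R R₁ R₂ : Q → Finset α → Prop} {S : Finset α} {c c₁ c₂ : ℕ}

/-- `S` has at most `c` subsets, each containing at least a fraction `1 / c` of its elements, such
that every `q` fails to cut one of them. Here and below, `R q A` is read as "`q` cuts `A`". -/
def HasUncutFamily (R : Q → Finset α → Prop) (S : Finset α) (c : ℕ) : Prop :=
  ∃ 𝒥 : Finset (Finset α), #𝒥 ≤ c ∧ (∀ J ∈ 𝒥, J ⊆ S ∧ #S ≤ c * #J) ∧ ∀ q, ∃ J ∈ 𝒥, ¬ R q J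

theorem hasUncutFamily_of_forall_not (h : ∀ q, ¬ R q S) (hc : 0 < c) : HasUncutFamily R S c :=
  ⟨{S}, by simpa using Nat.succ_le_of_lt hc, by simpa using Nat.le_mul_of_pos_left _ hc,
    by simpa using h⟩

theorem HasUncutFamily.mono (h : HasUncutFamily R S c₁) (hc : c₁ ≤ c₂) : HasUncutFamily R S c₂ := by
  obtain ⟨𝒥, h𝒥, hJ, hR⟩ := h
  exact ⟨𝒥, h𝒥.trans hc,
    fun J hJ𝒥 => ⟨(hJ J hJ𝒥).1, (hJ J hJ𝒥).2.trans (Nat.mul_le_mul_right _ hc)⟩, hR⟩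

theorem HasUncutFamily.or (h₁ : HasUncutFamily R₁ S c₁) (h₂ : ∀ J ⊆ S, HasUncutFamily R₂ J c₂)
    (hR₁ : ∀ q, Monotone (R₁ q)) :
    HasUncutFamily (fun q J => R₁ q J ∨ R₂ q J) S (c₁ * c₂) := by
  classical
  obtain ⟨𝒥, h𝒥, hJ, hR⟩ := h₁
  choose! 𝒦 h𝒦 hK hR₂ using fun J hJ𝒥 => h₂ J (hJ J hJ𝒥).1
  refine ⟨𝒥.biUnion 𝒦, ?_, fun K hK𝒦 => ?_, fun q => ?_⟩
  · exact (card_biUnion_le_card_mul _ _ _ h𝒦).trans (Nat.mul_le_mul_right _ h𝒥)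
  · obtain ⟨J, hJ𝒥, hKJ⟩ := mem_biUnion.1 hK𝒦
    refine ⟨(hK J hJ𝒥 K hKJ).1.trans (hJ J hJ𝒥).1, ?_⟩
    calc #S ≤ c₁ * #J := (hJ J hJ𝒥).2
      _ ≤ c₁ * (c₂ * #K) := by gcongr; exact (hK J hJ𝒥 K hKJ).2
      _ = c₁ * c₂ * #K := by ring
  · obtain ⟨J, hJ𝒥, hqJ⟩ := hR q
    obtain ⟨K, hKJ, hqK⟩ := hR₂ J hJ𝒥 q
    exact ⟨K, mem_biUnion.2 ⟨J, hJ𝒥, hKJ⟩,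
      not_or.2 ⟨fun h => hqJ (hR₁ q (hK J hJ𝒥 K hKJ).1 h), hqK⟩⟩

theorem HasUncutFamily.of_embeddings {R' : Q → Finset β → Prop} {S' : Finset β} {k : ℕ}
    (h : HasUncutFamily R' S' c) (x y : β ↪ α) (hx : S'.map x ⊆ S) (hy : S'.map y ⊆ S)
    (hk : 2 ≤ k) (hS : #S ≤ k * #S')
    (hR : ∀ q, ∀ J ⊆ S', R q (J.map x) → R q (J.map y) → R' q J) :
    HasUncutFamily R S (k * c) := by
  classical
  obtain ⟨𝒥, h𝒥, hJ, hR'⟩ := h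
  have hcard : ∀ J ∈ 𝒥, #S ≤ k * c * #J := fun J hJ𝒥 =>
    calc #S ≤ k * #S' := hS
      _ ≤ k * (c * #J) := by gcongr; exact (hJ J hJ𝒥).2
      _ = k * c * #J := by ring
  refine ⟨𝒥.image (map x) ∪ 𝒥.image (map y), ?_, fun J hJ𝒥 => ?_, fun q => ?_⟩
  · calc #(𝒥.image (map x) ∪ 𝒥.image (map y)) ≤ #𝒥 + #𝒥 :=
          (card_union_le _ _).trans (add_le_add card_image_le card_image_le)
      _ ≤ k * c := by nlinarith
  · simp only [mem_union, mem_image] at hJ𝒥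
    rcases hJ𝒥 with ⟨J, hJ𝒥, rfl⟩ | ⟨J, hJ𝒥, rfl⟩
    · exact ⟨(map_subset_map.2 (hJ J hJ𝒥).1).trans hx, by simpa using hcard J hJ𝒥⟩
    · exact ⟨(map_subset_map.2 (hJ J hJ𝒥).1).trans hy, by simpa using hcard J hJ𝒥⟩
  · obtain ⟨J, hJ𝒥, hqJ⟩ := hR' q
    by_cases hqx : R q (J.map x)
    · exact ⟨J.map y, mem_union_right _ (mem_image_of_mem _ hJ𝒥),
        fun hqy => hqJ (hR q J (hJ J hJ𝒥).1 hqx hqy)⟩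
    · exact ⟨J.map x, mem_union_left _ (mem_image_of_mem _ hJ𝒥), hqx⟩

end UncutFamilies

section Medians

variable {α β : Type*} [LinearOrder β]

theorem exists_median [Nonempty β] (S : Finset α) (b : α → β) :
    ∃ t, #S ≤ 2 * #{x ∈ S | b x ≤ t} ∧ #S ≤ 2 * #{x ∈ S | t ≤ b x} := by
  rcases S.eq_empty_or_nonempty with rfl | hS
  · exact ⟨Classical.arbitrary β, by simp⟩
  let U := {y ∈ S | #S ≤ 2 * #{x ∈ S | b x ≤ b y}}
  have hU : U.Nonempty := by
    obtain ⟨y, hy, hmax⟩ := S.exists_max_image b hS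
    refine ⟨y, mem_filter.2 ⟨hy, ?_⟩⟩
    rw [filter_true_of_mem hmax]
    omega
  obtain ⟨y, hyU, hmin⟩ := U.exists_min_image b hU
  refine ⟨b y, (mem_filter.1 hyU).2, ?_⟩
  by_contra! hlt
  have hsplit := card_filter_add_card_filter_not (s := S) (fun x => b y ≤ b x)
  obtain ⟨z, hz, hzmax⟩ := exists_max_image {x ∈ S | ¬ b y ≤ b x} b (card_pos.1 (by omega))
  rw [mem_filter, not_le] at hz
  have hle : #{x ∈ S | ¬ b y ≤ b x} ≤ #{x ∈ S | b x ≤ b z} :=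
    card_le_card fun x hx => mem_filter.2 ⟨(mem_filter.1 hx).1, hzmax x hx⟩
  exact (hmin z (mem_filter.2 ⟨hz.1, by omega⟩)).not_gt hz.2

theorem exists_median_pairing [Nonempty β] (S : Finset α) (b : α → β) :
    ∃ t, ∃ L ⊆ S, ∃ r : L ↪ α, #S ≤ 2 * #L ∧ ∀ x : L, r x ∈ S ∧ b x ≤ t ∧ t ≤ b (r x) := by
  obtain ⟨t, hlow, hhigh⟩ := exists_median S b
  obtain ⟨L, hL, hLcard⟩ :=
    exists_subset_card_eq (min_le_left #{x ∈ S | b x ≤ t} #{x ∈ S | t ≤ b x})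
  obtain ⟨H, hH, hHcard⟩ :=
    exists_subset_card_eq (min_le_right #{x ∈ S | b x ≤ t} #{x ∈ S | t ≤ b x})
  let e : L ≃ H := equivOfCardEq (hLcard.trans hHcard.symm)
  refine ⟨t, L, hL.trans (filter_subset _ _), e.toEmbedding.trans (.subtype _), by omega,
    fun x => ?_⟩
  have hex := mem_filter.1 (hH (e x).2)
  exact ⟨hex.1, (mem_filter.1 (hL x.2)).2, hex.2⟩

end Medians

section SignChanges

section Zero

variable {α ι 𝕜 : Type*} [Zero 𝕜] [LinearOrder 𝕜]

/-- `f` takes both strict signs on `A`; for an affine functional `f` this is `Cuts f A`. -/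
def ChangesSignOn (f : α → 𝕜) (A : Finset α) : Prop :=
  (∃ x ∈ A, 0 < f x) ∧ ∃ x ∈ A, f x < 0

theorem not_changesSignOn {f : α → 𝕜} {A : Finset α} :
    ¬ ChangesSignOn f A ↔ (∀ x ∈ A, f x ≤ 0) ∨ ∀ x ∈ A, 0 ≤ f x := by
  rw [ChangesSignOn, not_and_or]
  push Not
  rfl

theorem monotone_changesSignOn (f : α → 𝕜) : Monotone (ChangesSignOn f) :=
  fun _ _ hAB => And.imp (Exists.imp fun _ => And.imp_left (hAB ·))
    (Exists.imp fun _ => And.imp_left (hAB ·))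

theorem changesSignOn_map {f : α → 𝕜} {x : ι ↪ α} {J : Finset ι} :
    ChangesSignOn f (J.map x) ↔ ChangesSignOn (f ∘ x) J := by
  simp [ChangesSignOn]

theorem exists_large_subset_sign_constant (f : α → 𝕜) (S : Finset α) :
    ∃ A ⊆ S, #S ≤ 3 * #A ∧
      ((∀ x ∈ A, f x = 0) ∨ (∀ x ∈ A, 0 < f x) ∨ ∀ x ∈ A, f x < 0) := by
  classical
  have hunion : S ⊆ {x ∈ S | f x = 0} ∪ ({x ∈ S | 0 < f x} ∪ {x ∈ S | f x < 0}) := fun x hx => by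
    have := lt_trichotomy (f x) 0
    grind
  have hcard := (card_le_card hunion).trans <| (card_union_le _ _).trans <|
    Nat.add_le_add_left (card_union_le _ _) _
  by_cases hzero : #S ≤ 3 * #{x ∈ S | f x = 0}
  · exact ⟨_, filter_subset _ _, hzero, .inl fun x hx => (mem_filter.1 hx).2⟩
  by_cases hpos : #S ≤ 3 * #{x ∈ S | 0 < f x}
  · exact ⟨_, filter_subset _ _, hpos, .inr <| .inl fun x hx => (mem_filter.1 hx).2⟩
  · exact ⟨{x ∈ S | f x < 0}, filter_subset _ _, by omega,
      .inr <| .inr fun x hx => (mem_filter.1 hx).2⟩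

end Zero

variable {α 𝕜 : Type*} [Field 𝕜] [LinearOrder 𝕜] [IsStrictOrderedRing 𝕜]

theorem ChangesSignOn.mul_left {f w : α → 𝕜} {A : Finset α} (h : ChangesSignOn f A)
    (hw : (∀ x ∈ A, 0 < w x) ∨ ∀ x ∈ A, w x < 0) : ChangesSignOn (w * f) A := by
  obtain ⟨⟨x, hx, hfx⟩, y, hy, hfy⟩ := h
  rcases hw with hw | hw
  · exact ⟨⟨x, hx, mul_pos (hw x hx) hfx⟩, y, hy, mul_neg_of_pos_of_neg (hw y hy) hfy⟩
  · exact ⟨⟨y, hy, mul_pos_of_neg_of_neg (hw y hy) hfy⟩, x, hx, mul_neg_of_neg_of_pos (hw x hx) hfx⟩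

-- Each of `f i`, `g i` is a convex combination `v i` of the two, moved by a multiple of `g i - f i`
-- whose sign is known. So if neither `g - f` nor `v` changes sign, their two signs decide that of
-- `g` or that of `f`.
theorem ChangesSignOn.sub_or_combination {f g s t : α → 𝕜} {A : Finset α}
    (hs : ∀ i, 0 ≤ s i) (ht : ∀ i, 0 ≤ t i) (hst : ∀ i, s i + t i = 1)
    (hf : ChangesSignOn f A) (hg : ChangesSignOn g A) :
    ChangesSignOn (g - f) A ∨ ChangesSignOn (s * f + t * g) A := by
  have hf_eq : ∀ i, f i = (s * f + t * g) i - t i * (g - f) i := fun i => by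
    simp only [Pi.add_apply, Pi.mul_apply, Pi.sub_apply]
    linear_combination -(hst i) * f i
  have hg_eq : ∀ i, g i = (s * f + t * g) i + s i * (g - f) i := fun i => by
    simp only [Pi.add_apply, Pi.mul_apply, Pi.sub_apply]
    linear_combination -(hst i) * g i
  by_contra! h
  rcases not_changesSignOn.1 h.1 with hu | hu <;> rcases not_changesSignOn.1 h.2 with hv | hv
  · refine not_changesSignOn.2 (.inl fun i hi => ?_) hg
    linarith [hg_eq i, hv i hi, mul_nonpos_of_nonneg_of_nonpos (hs i) (hu i hi)]
  · refine not_changesSignOn.2 (.inr fun i hi => ?_) hf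
    linarith [hf_eq i, hv i hi, mul_nonpos_of_nonneg_of_nonpos (ht i) (hu i hi)]
  · refine not_changesSignOn.2 (.inl fun i hi => ?_) hf
    linarith [hf_eq i, hv i hi, mul_nonneg (ht i) (hu i hi)]
  · refine not_changesSignOn.2 (.inr fun i hi => ?_) hg
    linarith [hg_eq i, hv i hi, mul_nonneg (hs i) (hu i hi)]

end SignChanges

section FunctionSpaces

universe u

theorem finrank_range_comp_lt {𝕜 E V W : Type*} [DivisionRing 𝕜] [AddCommGroup E] [Module 𝕜 E]
    [FiniteDimensional 𝕜 E] [AddCommGroup V] [Module 𝕜 V] [AddCommGroup W] [Module 𝕜 W]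
    (Φ : E →ₗ[𝕜] V) (T : V →ₗ[𝕜] W) {a : E} (ha : Φ a ≠ 0) (hT : T (Φ a) = 0) :
    finrank 𝕜 (T ∘ₗ Φ).range < finrank 𝕜 Φ.range := by
  have hker : finrank 𝕜 Φ.ker < finrank 𝕜 (T ∘ₗ Φ).ker :=
    Submodule.finrank_lt_finrank_of_lt <|
      SetLike.lt_iff_le_and_exists.2 ⟨LinearMap.ker_le_ker_comp Φ T, a, hT, ha⟩
  have hΦ := Φ.finrank_range_add_finrank_ker
  have hTΦ := (T ∘ₗ Φ).finrank_range_add_finrank_ker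
  omega

variable {𝕜 E : Type*} {α : Type u} [Field 𝕜] [LinearOrder 𝕜] [IsStrictOrderedRing 𝕜]
  [AddCommGroup E] [Module 𝕜 E]

theorem HasUncutFamily.of_mulLeft {Φ : E →ₗ[𝕜] α → 𝕜} {w : α → 𝕜} {S A : Finset α} {c : ℕ}
    (h : HasUncutFamily (fun e => ChangesSignOn ((LinearMap.mulLeft 𝕜 w ∘ₗ Φ) e)) A c)
    (hA : A ⊆ S) (hcard : #S ≤ 3 * #A) (hw : (∀ x ∈ A, 0 < w x) ∨ ∀ x ∈ A, w x < 0) :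
    HasUncutFamily (fun e => ChangesSignOn (Φ e)) S (3 * c) := by
  refine h.of_embeddings (.refl α) (.refl α) (by simpa) (by simpa) (by norm_num) hcard
    fun e J hJ hcut _ => ?_
  rw [map_refl] at hcut
  exact hcut.mul_left (hw.imp (fun h x hx => h x (hJ hx)) fun h x hx => h x (hJ hx))

theorem exists_convex_combination_eq_zero {x y : 𝕜} (hx : x ≤ 0) (hy : 0 ≤ y) :
    ∃ p q : 𝕜, 0 ≤ p ∧ 0 ≤ q ∧ p + q = 1 ∧ p * x + q * y = 0 := by
  have hmem : (0 : 𝕜) ∈ segment 𝕜 x y := by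
    rw [segment_eq_Icc (hx.trans hy)]
    exact ⟨hx, hy⟩
  simpa [segment] using hmem

variable [FiniteDimensional 𝕜 E]

-- On each of the pairs from `exists_median_pairing`, `b` minus its median vanishes at a convex
-- combination, and `a` has difference zero. So the differences and these convex combinations
-- both define function spaces of smaller rank.
theorem hasUncutFamily_of_eq_one {c n : ℕ}
    (ih : ∀ {ι : Type u} (Ψ : E →ₗ[𝕜] ι → 𝕜), finrank 𝕜 Ψ.range ≤ n →
      ∀ A, HasUncutFamily (fun e => ChangesSignOn (Ψ e)) A c)
    (Φ : E →ₗ[𝕜] α → 𝕜) (hΦ : finrank 𝕜 Φ.range ≤ n + 1) (S : Finset α) (hc : 0 < c) {a : E}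
    (ha : ∀ x ∈ S, Φ a x = 1) :
    HasUncutFamily (fun e => ChangesSignOn (Φ e)) S (2 * (c * c)) := by
  by_cases hconst : ∀ e, ∃ t, ∀ x ∈ S, Φ e x = t
  · refine hasUncutFamily_of_forall_not (fun e => not_changesSignOn.2 ?_) (by positivity)
    obtain ⟨t, ht⟩ := hconst e
    exact (le_total t 0).imp (fun h x hx => (ht x hx).trans_le h)
      fun h x hx => h.trans_eq (ht x hx).symm
  push Not at hconst
  obtain ⟨b, hb⟩ := hconst
  obtain ⟨t, L, hLS, r, hcard, hr⟩ := exists_median_pairing S (Φ b)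
  choose p q hp hq hpq hzero using fun x : L =>
    exists_convex_combination_eq_zero (sub_nonpos.2 (hr x).2.1) (sub_nonneg.2 (hr x).2.2)
  let low : (α → 𝕜) →ₗ[𝕜] L → 𝕜 := LinearMap.funLeft 𝕜 𝕜 (↑)
  let high : (α → 𝕜) →ₗ[𝕜] L → 𝕜 := LinearMap.funLeft 𝕜 𝕜 r
  let diff := high - low
  let comb := LinearMap.mulLeft 𝕜 p ∘ₗ low + LinearMap.mulLeft 𝕜 q ∘ₗ high
  have hdiff : finrank 𝕜 (diff ∘ₗ Φ).range < finrank 𝕜 Φ.range := by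
    obtain ⟨x₀, hx₀, -⟩ := hb 0
    refine finrank_range_comp_lt Φ diff (a := a) (fun h => ?_) (funext fun x => ?_)
    · simpa [h] using ha x₀ hx₀
    · simp [diff, low, high, LinearMap.funLeft, ha x (hLS x.2), ha (r x) (hr x).1]
  have hcomb : finrank 𝕜 (comb ∘ₗ Φ).range < finrank 𝕜 Φ.range := by
    obtain ⟨x₁, hx₁, hbx₁⟩ := hb t
    refine finrank_range_comp_lt Φ comb (a := b - t • a) (fun h => ?_) (funext fun x => ?_)
    · refine hbx₁ (sub_eq_zero.1 ?_)
      simpa [ha x₁ hx₁] using congr_fun h x₁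
    · simpa [comb, low, high, LinearMap.funLeft, ha x (hLS x.2), ha (r x) (hr x).1] using hzero x
  have hfamily := (ih (diff ∘ₗ Φ) (by omega) univ).or (fun J _ => ih (comb ∘ₗ Φ) (by omega) J)
    fun e => monotone_changesSignOn _
  refine hfamily.of_embeddings (.subtype _) r (fun x hx => ?_) (fun x hx => ?_) le_rfl
    (by simpa using hcard) fun e J _ hlow hhigh => ChangesSignOn.sub_or_combination hp hq hpq
      (changesSignOn_map.1 hlow) (changesSignOn_map.1 hhigh)
  · obtain ⟨y, -, rfl⟩ := mem_map.1 hx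
    exact hLS y.2
  · obtain ⟨y, -, rfl⟩ := mem_map.1 hx
    exact (hr y).1

theorem six_pow_two_pow_succ_sub_one (n : ℕ) :
    6 ^ (2 ^ (n + 1) - 1) = 3 * (2 * (6 ^ (2 ^ n - 1) * 6 ^ (2 ^ n - 1))) := by
  have hexp : 2 ^ (n + 1) - 1 = (2 ^ n - 1) + (2 ^ n - 1) + 1 := by
    have := Nat.one_le_two_pow (n := n)
    omega
  rw [hexp, pow_succ, pow_add]
  ring

theorem hasUncutFamily_changesSignOn (n : ℕ) {α : Type u} (Φ : E →ₗ[𝕜] α → 𝕜)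
    (hΦ : finrank 𝕜 Φ.range ≤ n) (S : Finset α) :
    HasUncutFamily (fun e => ChangesSignOn (Φ e)) S (6 ^ (2 ^ n - 1)) := by
  induction n generalizing α with
  | zero =>
    rw [Nat.le_zero, Submodule.finrank_eq_zero, LinearMap.range_eq_bot] at hΦ
    exact hasUncutFamily_of_forall_not (fun e => by simp [hΦ, ChangesSignOn]) (by positivity)
  | succ n ih =>
    by_cases hΦ₀ : Φ = 0
    · exact hasUncutFamily_of_forall_not (fun e => by simp [hΦ₀, ChangesSignOn]) (by positivity)
    have hc : 0 < 6 ^ (2 ^ n - 1) := by positivity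
    obtain ⟨a, ha⟩ := DFunLike.ne_iff.1 hΦ₀
    obtain ⟨A, hAS, hcard, hzero | hsign⟩ := exists_large_subset_sign_constant (Φ a) S
    all_goals rw [six_pow_two_pow_succ_sub_one]
    · let w := Set.indicator {x | Φ a x = 0} (1 : α → 𝕜)
      have hrank : finrank 𝕜 (LinearMap.mulLeft 𝕜 w ∘ₗ Φ).range < finrank 𝕜 Φ.range :=
        finrank_range_comp_lt Φ _ ha (funext fun x => by simp [w, Set.indicator])
      exact ((ih (LinearMap.mulLeft 𝕜 w ∘ₗ Φ) (by omega) A).mono (by nlinarith)).of_mulLeft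
        hAS hcard (.inl fun x hx => by simp [w, hzero x hx])
    · let w := (Φ a)⁻¹
      have hrank : finrank 𝕜 (LinearMap.mulLeft 𝕜 w ∘ₗ Φ).range ≤ finrank 𝕜 Φ.range := by
        rw [LinearMap.range_comp]
        exact Submodule.finrank_map_le _ _
      have hone : ∀ x ∈ A, (LinearMap.mulLeft 𝕜 w ∘ₗ Φ) a x = 1 := fun x hx => by
        have hne : Φ a x ≠ 0 := hsign.elim (fun h => (h x hx).ne') fun h => (h x hx).ne
        simp [w, hne]
      exact (hasUncutFamily_of_eq_one ih _ (hrank.trans hΦ) A hc hone).of_mulLeft hAS hcard <|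
        hsign.imp (fun h x hx => inv_pos.2 (h x hx)) fun h x hx => inv_lt_zero.2 (h x hx)

end FunctionSpaces

section Packings

variable {α Q : Type*} {R : Q → Finset α → Prop} {S : Finset α} {s t : ℕ}
  {P F B : Finset (Finset α)}

/-- `P` consists of pairwise disjoint subsets of `S` with `s` elements each. -/
structure IsPacking (S : Finset α) (s : ℕ) (P : Finset (Finset α)) : Prop where
  subset : ∀ A ∈ P, A ⊆ S
  card_eq : ∀ A ∈ P, #A = s
  pairwiseDisjoint : (P : Set (Finset α)).PairwiseDisjoint id

theorem isPacking_empty : IsPacking S s ∅ :=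
  ⟨by simp, by simp, by simp⟩

theorem exists_pairwise_disjoint_subsets_card_eq {κ : Type*} [Fintype κ] (A : κ → Finset α)
    (hA : ∀ k, Fintype.card κ * s ≤ #(A k)) :
    ∃ T : κ → Finset α, (∀ k, T k ⊆ A k ∧ #(T k) = s) ∧ Pairwise (Function.onFun Disjoint T) := by
  classical
  have hHall : ∀ X : Finset (κ × Fin s), #X ≤ #(X.biUnion fun k => A k.1) := fun X => by
    rcases X.eq_empty_or_nonempty with rfl | ⟨k, hk⟩
    · simp
    calc #X ≤ Fintype.card (κ × Fin s) := card_le_univ X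
      _ = Fintype.card κ * s := by simp
      _ ≤ #(A k.1) := hA k.1
      _ ≤ _ := card_le_card (subset_biUnion_of_mem (fun k => A k.1) hk)
  obtain ⟨f, hf, hfA⟩ := (all_card_le_biUnion_card_iff_exists_injective _).1 hHall
  refine ⟨fun k => univ.image fun i => f (k, i), fun k => ⟨?_, ?_⟩, fun k l hkl => ?_⟩
  · exact image_subset_iff.2 fun i _ => hfA (k, i)
  · exact (card_image_of_injective _ (hf.comp (Prod.mk_right_injective k))).trans (card_fin s)
  · simp only [Function.onFun, disjoint_left, mem_image]
    rintro _ ⟨i, -, rfl⟩ ⟨j, -, hij⟩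
    exact hkl (congrArg Prod.fst (hf hij)).symm

theorem HasUncutFamily.exists_isPacking {c : ℕ} (h : HasUncutFamily R S c)
    (hR : ∀ q, Monotone (R q)) (hS : c * c * s ≤ #S) :
    ∃ F, #F ≤ c ∧ IsPacking S s F ∧ ∀ q, ∃ A ∈ F, ¬ R q A := by
  classical
  obtain ⟨𝒥, h𝒥, hJ, hq⟩ := h
  have hcard : ∀ J : 𝒥, Fintype.card 𝒥 * s ≤ #(J : Finset α) := fun J => by
    have hc : 0 < c := (card_pos.2 ⟨J.1, J.2⟩).trans_le h𝒥
    rw [Fintype.card_coe]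
    refine (Nat.mul_le_mul_right s h𝒥).trans (Nat.le_of_mul_le_mul_left ?_ hc)
    rw [← mul_assoc]
    exact hS.trans (hJ J J.2).2
  obtain ⟨T, hT, hdisj⟩ := exists_pairwise_disjoint_subsets_card_eq _ hcard
  refine ⟨univ.image T, card_image_le.trans (by simpa using h𝒥), ⟨?_, ?_, ?_⟩, fun q => ?_⟩
  · exact forall_mem_image.2 fun J _ => (hT J).1.trans (hJ J J.2).1
  · exact forall_mem_image.2 fun J _ => (hT J).2
  · rw [coe_image, coe_univ, Set.image_univ]
    rintro _ ⟨J, rfl⟩ _ ⟨K, rfl⟩ hne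
    exact hdisj fun h => hne (congrArg T h)
  · obtain ⟨J, hJ𝒥, hqJ⟩ := hq q
    exact ⟨T ⟨J, hJ𝒥⟩, mem_image_of_mem T (mem_univ _), fun h => hqJ (hR q (hT ⟨J, hJ𝒥⟩).1 h)⟩

open Classical in
/-- The number of members of `P` cut by `q`. -/
def cutNumber (R : Q → Finset α → Prop) (q : Q) (P : Finset (Finset α)) : ℕ :=
  #{A ∈ P | R q A}

theorem cutNumber_le_card (q : Q) : cutNumber R q P ≤ #P := by
  classical
  exact card_filter_le _ _

theorem IsPacking.card_biUnion [DecidableEq α] (h : IsPacking S s P) : #(P.biUnion id) = #P * s :=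
  (Finset.card_biUnion h.pairwiseDisjoint).trans (sum_const_nat h.card_eq)

theorem IsPacking.card_mul_le (h : IsPacking S s P) : #P * s ≤ #S := by
  classical
  exact h.card_biUnion.ge.trans (card_le_card (biUnion_subset.2 h.subset))

variable [DecidableEq α]

/-- The elements of `S` left over by the family `P`. -/
def uncovered (S : Finset α) (P : Finset (Finset α)) : Finset α :=
  S \ P.biUnion id

theorem mem_uncovered {x : α} : x ∈ uncovered S P ↔ x ∈ S ∧ ∀ A ∈ P, x ∉ A := by
  simp [uncovered]

theorem uncovered_subset : uncovered S P ⊆ S :=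
  sdiff_subset

theorem cutNumber_union_le (q : Q) : cutNumber R q (P ∪ F) ≤ cutNumber R q P + cutNumber R q F := by
  classical
  rw [cutNumber, filter_union]
  exact card_union_le _ _

theorem IsPacking.card_mul_add_card_uncovered (h : IsPacking S s P) :
    #P * s + #(uncovered S P) = #S := by
  rw [← h.card_biUnion, add_comm]
  exact card_sdiff_add_card_eq_card (biUnion_subset.2 h.subset)

theorem IsPacking.disjoint_of_uncovered (hF : IsPacking (uncovered S P) s F) (hs : 0 < s) :
    Disjoint P F := by
  refine disjoint_left.2 fun A hAP hAF => ?_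
  obtain ⟨x, hx⟩ := card_pos.1 (hs.trans_eq (hF.card_eq A hAF).symm)
  exact (mem_uncovered.1 (hF.subset A hAF hx)).2 A hAP hx

theorem IsPacking.union (hP : IsPacking S s P) (hF : IsPacking (uncovered S P) s F) :
    IsPacking S s (P ∪ F) := by
  refine ⟨fun A hA => ?_, fun A hA => ?_, ?_⟩
  · exact (mem_union.1 hA).elim (hP.subset A) fun hA => (hF.subset A hA).trans uncovered_subset
  · exact (mem_union.1 hA).elim (hP.card_eq A) (hF.card_eq A)
  · rw [coe_union, Set.pairwiseDisjoint_union]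
    exact ⟨hP.pairwiseDisjoint, hF.pairwiseDisjoint, fun A hA C hC _ => disjoint_right.2
      fun x hxC => (mem_uncovered.1 (hF.subset C hC hxC)).2 A hA⟩

theorem IsPacking.exists_maximal (hP : IsPacking S s P) (hs : 0 < s)
    {p : Finset (Finset α) → Prop} (hp : p P) :
    ∃ P', P ⊆ P' ∧ IsPacking S s P' ∧ p P' ∧
      ∀ F, IsPacking (uncovered S P') s F → p (P' ∪ F) → F = ∅ := by
  have hfin : {P | IsPacking S s P ∧ p P}.Finite :=
    S.powerset.powerset.finite_toSet.subset fun P hP =>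
      mem_coe.2 (mem_powerset.2 fun A hA => mem_powerset.2 (hP.1.subset A hA))
  obtain ⟨P', hPP', ⟨hP', hpP'⟩, hmax⟩ := hfin.exists_le_maximal ⟨hP, hp⟩
  refine ⟨P', hPP', hP', hpP', fun F hF hpF => ?_⟩
  have hFP' : F ⊆ P' := subset_union_right.trans (hmax ⟨hP'.union hF, hpF⟩ subset_union_left)
  exact disjoint_self_iff_empty _ |>.1 ((hF.disjoint_of_uncovered hs).mono_left hFP')

theorem IsPacking.exists_card_uncovered_lt (hP : IsPacking S s P) (hs : 0 < s) :
    ∃ P', P ⊆ P' ∧ IsPacking S s P' ∧ #(uncovered S P') < s := by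
  obtain ⟨P', hPP', hP', -, hmax⟩ := hP.exists_maximal hs (p := fun _ => True) trivial
  refine ⟨P', hPP', hP', ?_⟩
  by_contra! hle
  obtain ⟨A, hA, hAcard⟩ := exists_subset_card_eq hle
  have hpacking : IsPacking (uncovered S P') s {A} := ⟨by simpa, by simpa, by simp⟩
  exact singleton_ne_empty A (hmax _ hpacking trivial)

theorem exists_isPacking_mul_cutNumber_add_card_le [Nonempty Q] {c : ℕ}
    (h : ∀ A, HasUncutFamily R A c) (hR : ∀ q, Monotone (R q)) (S : Finset α) (hs : 0 < s) :
    ∃ P, IsPacking S s P ∧ #(uncovered S P) ≤ c * c * s ∧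
      ∀ q, c * cutNumber R q P + #P ≤ c * #P := by
  classical
  obtain ⟨P, -, hP, hPq, hmax⟩ := isPacking_empty.exists_maximal (S := S) hs
    (p := fun P => ∀ q, c * cutNumber R q P + #P ≤ c * #P) (by simp [cutNumber])
  refine ⟨P, hP, ?_, hPq⟩
  by_contra! hlt
  obtain ⟨F, hFc, hF, hFq⟩ := (h (uncovered S P)).exists_isPacking hR hlt.le
  have hempty : F = ∅ := hmax F hF fun q => by
    obtain ⟨A, hAF, hqA⟩ := hFq q
    have hcut : cutNumber R q F < #F := card_lt_card (filter_ssubset.2 ⟨A, hAF, hqA⟩)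
    rw [card_union_of_disjoint (hF.disjoint_of_uncovered hs)]
    nlinarith [hPq q, cutNumber_union_le (R := R) (P := P) (F := F) q]
  obtain ⟨A, hAF, -⟩ := hFq (Classical.arbitrary Q)
  simp [hempty] at hAF

theorem IsPacking.biUnion {𝒬 : Finset α → Finset (Finset α)} (hB : IsPacking S t B)
    (h𝒬 : ∀ A ∈ B, IsPacking A s (𝒬 A)) : IsPacking S s (B.biUnion 𝒬) := by
  refine ⟨fun C hC => ?_, fun C hC => ?_, fun C hC C' hC' hne => ?_⟩
  · obtain ⟨A, hA, hCA⟩ := mem_biUnion.1 hC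
    exact ((h𝒬 A hA).subset C hCA).trans (hB.subset A hA)
  · obtain ⟨A, hA, hCA⟩ := mem_biUnion.1 hC
    exact (h𝒬 A hA).card_eq C hCA
  · obtain ⟨A, hA, hCA⟩ := mem_biUnion.1 (mem_coe.1 hC)
    obtain ⟨A', hA', hCA'⟩ := mem_biUnion.1 (mem_coe.1 hC')
    rcases eq_or_ne A A' with rfl | hAA'
    · exact (h𝒬 A hA).pairwiseDisjoint hCA hCA' hne
    · exact (hB.pairwiseDisjoint hA hA' hAA').mono
        ((h𝒬 A hA).subset C hCA) ((h𝒬 A' hA').subset C' hCA')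

theorem card_uncovered_biUnion_le {𝒬 : Finset α → Finset (Finset α)} {k : ℝ} (S : Finset α)
    (h : ∀ A ∈ B, #(uncovered A (𝒬 A)) ≤ k) :
    #(uncovered S (B.biUnion 𝒬)) ≤ #(uncovered S B) + #B * k := by
  have hsub : uncovered S (B.biUnion 𝒬) ⊆
      uncovered S B ∪ B.biUnion fun A => uncovered A (𝒬 A) := fun x hx => by
    simp only [mem_union, mem_biUnion, mem_uncovered] at hx ⊢
    grind
  calc (#(uncovered S (B.biUnion 𝒬)) : ℝ)
      ≤ #(uncovered S B) + ∑ A ∈ B, (#(uncovered A (𝒬 A)) : ℝ) := mod_cast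
        (card_le_card hsub).trans <| (card_union_le _ _).trans <|
          Nat.add_le_add_left card_biUnion_le _
    _ ≤ #(uncovered S B) + #B * k := by
        rw [← nsmul_eq_mul]
        gcongr
        exact sum_le_card_nsmul _ _ _ h

theorem cutNumber_biUnion_le {𝒬 : Finset α → Finset (Finset α)} {q : Q} {k : ℝ}
    (hR : Monotone (R q)) (h𝒬 : ∀ A ∈ B, ∀ C ∈ 𝒬 A, C ⊆ A) (h : ∀ A ∈ B, cutNumber R q (𝒬 A) ≤ k) :
    cutNumber R q (B.biUnion 𝒬) ≤ cutNumber R q B * k := by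
  classical
  have hsub : {C ∈ B.biUnion 𝒬 | R q C} ⊆
      {A ∈ B | R q A}.biUnion fun A => {C ∈ 𝒬 A | R q C} := fun C hC => by
    simp only [mem_filter, mem_biUnion] at hC ⊢
    obtain ⟨⟨A, hA, hCA⟩, hqC⟩ := hC
    exact ⟨A, ⟨hA, hR (h𝒬 A hA C hCA) hqC⟩, hCA, hqC⟩
  calc (cutNumber R q (B.biUnion 𝒬) : ℝ)
      ≤ ∑ A ∈ B with R q A, (cutNumber R q (𝒬 A) : ℝ) := by
        exact_mod_cast (card_le_card hsub).trans card_biUnion_le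
    _ ≤ cutNumber R q B * k := by
        rw [← nsmul_eq_mul]
        exact sum_le_card_nsmul _ _ _ fun A hA => h A (mem_filter.1 hA).1

end Packings

section CutRatios

variable {α Q : Type*} [DecidableEq α] {R : Q → Finset α → Prop} {θ η : ℝ}

/-- Up to an arbitrarily small proportion and boundedly many blocks, every finite set `S` can be
packed with blocks of any given size `s` so that the blocks cut by any one `q` contain at most
`θ * #S` elements. -/
def HasCutRatio (R : Q → Finset α → Prop) (θ : ℝ) : Prop :=
  ∀ δ > 0, ∃ M : ℕ, ∀ (S : Finset α) (s : ℕ), 0 < s → ∃ P, IsPacking S s P ∧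
    (#(uncovered S P) : ℝ) ≤ δ * #S + M * s ∧ ∀ q, (s : ℝ) * cutNumber R q P ≤ θ * #S

theorem HasCutRatio.mono (h : HasCutRatio R θ) (hθη : θ ≤ η) : HasCutRatio R η := by
  intro δ hδ
  obtain ⟨M, hM⟩ := h δ hδ
  refine ⟨M, fun S s hs => ?_⟩
  obtain ⟨P, hP, hPu, hPq⟩ := hM S s hs
  exact ⟨P, hP, hPu, fun q => (hPq q).trans (by gcongr)⟩

theorem hasCutRatio_one (R : Q → Finset α → Prop) : HasCutRatio R 1 := by
  refine fun δ hδ => ⟨1, fun S s hs => ?_⟩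
  obtain ⟨P, -, hP, hlt⟩ := isPacking_empty.exists_card_uncovered_lt (S := S) hs
  refine ⟨P, hP, ?_, fun q => ?_⟩
  · have hle : (#(uncovered S P) : ℝ) ≤ s := mod_cast hlt.le
    have hnonneg : 0 ≤ δ * #S := by positivity
    push_cast
    linarith
  · rw [one_mul, mul_comm]
    exact_mod_cast (Nat.mul_le_mul_right s (cutNumber_le_card q)).trans hP.card_mul_le

theorem hasCutRatio_one_sub_inv [Nonempty Q] {c : ℕ} (hc : 0 < c)
    (h : ∀ A, HasUncutFamily R A c) (hR : ∀ q, Monotone (R q)) :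
    HasCutRatio R (1 - (c : ℝ)⁻¹) := by
  refine fun δ hδ => ⟨c * c, fun S s hs => ?_⟩
  obtain ⟨P, hP, hPu, hPq⟩ := exists_isPacking_mul_cutNumber_add_card_le h hR S hs
  refine ⟨P, hP, ?_, fun q => ?_⟩
  · have hle : (#(uncovered S P) : ℝ) ≤ (c * c : ℕ) * s := mod_cast hPu
    have hnonneg : 0 ≤ δ * #S := by positivity
    linarith
  · have hc₀ : (0 : ℝ) < c := mod_cast hc
    have hcut : (cutNumber R q P : ℝ) ≤ (1 - (c : ℝ)⁻¹) * #P := by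
      refine le_of_mul_le_mul_left ?_ hc₀
      rw [← mul_assoc, mul_one_sub, mul_inv_cancel₀ hc₀.ne', sub_one_mul, le_sub_iff_add_le]
      exact_mod_cast hPq q
    have hcard : (#P : ℝ) * s ≤ #S := mod_cast hP.card_mul_le
    have hθ : 0 ≤ 1 - (c : ℝ)⁻¹ := sub_nonneg.2 (inv_le_one_of_one_le₀ (mod_cast hc))
    calc (s : ℝ) * cutNumber R q P ≤ s * ((1 - (c : ℝ)⁻¹) * #P) := by gcongr
      _ = (1 - (c : ℝ)⁻¹) * (#P * s) := by ring
      _ ≤ (1 - (c : ℝ)⁻¹) * #S := by gcongr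

-- Pack `S` with coarse blocks of size `L * s`, then each of them with blocks of size `s`. For large
-- `L` the at most `M * s` points lost inside a coarse block are a small proportion of it.
theorem HasCutRatio.mul (hθ : HasCutRatio R θ) (hη : HasCutRatio R η) (hη₀ : 0 ≤ η)
    (hR : ∀ q, Monotone (R q)) : HasCutRatio R (θ * η) := by
  intro δ hδ
  obtain ⟨M, hM⟩ := hη (δ / 3) (by positivity)
  obtain ⟨N, hN⟩ := hθ (δ / 3) (by positivity)
  obtain ⟨L, hL⟩ := exists_nat_gt (3 * M / δ)
  have hL₀ : (0 : ℝ) < L := lt_of_le_of_lt (by positivity) hL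
  rw [div_lt_iff₀ hδ] at hL
  refine ⟨N * L, fun S s hs => ?_⟩
  obtain ⟨B, hB, hBu, hBq⟩ := hN S (L * s) (Nat.mul_pos (mod_cast hL₀) hs)
  choose 𝒬 h𝒬 h𝒬u h𝒬q using fun A => hM A s hs
  have hs₀ : (0 : ℝ) < s := mod_cast hs
  have hBcard : (#B : ℝ) * (L * s) ≤ #S := mod_cast hB.card_mul_le
  have hAcard : ∀ A ∈ B, (#A : ℝ) = L * s := fun A hA => mod_cast hB.card_eq A hA
  refine ⟨B.biUnion 𝒬, hB.biUnion fun A _ => h𝒬 A, ?_, fun q => ?_⟩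
  · have hA : ∀ A ∈ B, (#(uncovered A (𝒬 A)) : ℝ) ≤ 2 / 3 * δ * (L * s) := fun A hA => by
      have hMs := mul_le_mul_of_nonneg_right hL.le hs₀.le
      linarith [hAcard A hA ▸ h𝒬u A]
    have hscale := mul_le_mul_of_nonneg_left hBcard hδ.le
    push_cast at hBu ⊢
    linarith [card_uncovered_biUnion_le S hA]
  · have hA : ∀ A ∈ B, (cutNumber R q (𝒬 A) : ℝ) ≤ η * L := fun A hA =>
      le_of_mul_le_mul_left ((hAcard A hA ▸ h𝒬q A q).trans_eq (by ring)) hs₀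
    push_cast at hBq
    calc (s : ℝ) * cutNumber R q (B.biUnion 𝒬) ≤ s * (cutNumber R q B * (η * L)) := by
          gcongr
          exact cutNumber_biUnion_le (hR q) (fun A _ => (h𝒬 A).subset) hA
      _ = η * (L * s * cutNumber R q B) := by ring
      _ ≤ η * (θ * #S) := mul_le_mul_of_nonneg_left (hBq q) hη₀
      _ = θ * η * #S := by ring

theorem HasCutRatio.pow (h : HasCutRatio R θ) (hθ : 0 ≤ θ) (hR : ∀ q, Monotone (R q)) (n : ℕ) :
    HasCutRatio R (θ ^ n) := by
  induction n with
  | zero => simpa using hasCutRatio_one R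
  | succ n ih => exact pow_succ θ n ▸ ih.mul h hθ hR

theorem hasCutRatio_of_hasUncutFamily [Nonempty Q] {c : ℕ} (hc : 0 < c)
    (h : ∀ A, HasUncutFamily R A c) (hR : ∀ q, Monotone (R q)) {ε : ℝ} (hε : 0 < ε) :
    HasCutRatio R ε := by
  have hinv : 0 < (c : ℝ)⁻¹ := by positivity
  have hθ : 0 ≤ 1 - (c : ℝ)⁻¹ := sub_nonneg.2 (inv_le_one_of_one_le₀ (mod_cast hc))
  obtain ⟨n, hn⟩ := exists_pow_lt_of_lt_one hε (sub_lt_self 1 hinv)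
  exact ((hasCutRatio_one_sub_inv hc h hR).pow hθ hR n).mono hn.le

end CutRatios

section Partitions

variable {α Q : Type*} [DecidableEq α] {R : Q → Finset α → Prop} {S : Finset α}
  {P : Finset (Finset α)} {t p c : ℕ}

/-- `S` has a partition into at most `p` parts of size at most `⌈2 * #S / p⌉` such that every `q`
cuts at most `c` of them. -/
def HasFewCutPartition (R : Q → Finset α → Prop) (S : Finset α) (p c : ℕ) : Prop :=
  ∃ 𝒬 : Finpartition S, #𝒬.parts ≤ p ∧ (∀ A ∈ 𝒬.parts, #A ≤ (2 * #S + p - 1) / p) ∧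
    ∀ q, cutNumber R q 𝒬.parts ≤ c

theorem IsPacking.exists_finpartition (hP : IsPacking S t P) (ht : 0 < t) :
    ∃ 𝒬 : Finpartition S, (∀ A ∈ 𝒬.parts, #A ≤ t) ∧ P ⊆ 𝒬.parts ∧
      #(𝒬.parts \ P) * t ≤ #(uncovered S P) + t := by
  obtain ⟨P', hPP', hP', hlt⟩ := hP.exists_card_uncovered_lt ht
  have hdisj : (insert (uncovered S P') P' : Set (Finset α)).PairwiseDisjoint id :=
    hP'.pairwiseDisjoint.insert fun A hA _ => disjoint_left.2 fun x hx =>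
      (mem_uncovered.1 hx).2 A hA
  let 𝒬 : Finpartition S := .ofErase (insert (uncovered S P') P')
    (supIndep_iff_pairwiseDisjoint.2 (by simpa using hdisj)) <| by
      rw [sup_insert, sup_eq_biUnion]
      exact sdiff_union_of_subset (biUnion_subset.2 hP'.subset)
  refine ⟨𝒬, fun A hA => ?_, fun A hA => ?_, ?_⟩
  · obtain rfl | hA := mem_insert.1 (mem_of_mem_erase hA)
    exacts [hlt.le, (hP'.card_eq A hA).le]
  · refine mem_erase.2 ⟨?_, mem_insert_of_mem (hPP' hA)⟩
    exact (card_pos.1 (ht.trans_eq (hP.card_eq A hA).symm)).ne_empty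
  · have hparts : #(𝒬.parts \ P) ≤ #(P' \ P) + 1 := by
      refine (card_le_card fun A hA => ?_).trans (card_insert_le (uncovered S P') (P' \ P))
      obtain ⟨hA𝒬, hAP⟩ := mem_sdiff.1 hA
      exact (mem_insert.1 (mem_of_mem_erase hA𝒬)).elim (fun h => h ▸ mem_insert_self _ _)
        fun h => mem_insert_of_mem (mem_sdiff.2 ⟨h, hAP⟩)
    have hsdiff : #(P' \ P) + #P = #P' := card_sdiff_add_card_eq_card hPP'
    nlinarith [hP.card_mul_add_card_uncovered, hP'.card_mul_add_card_uncovered]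

theorem HasCutRatio.exists_hasFewCutPartition {ε : ℝ} (h : HasCutRatio R ε) (hε : 0 < ε) :
    ∃ M : ℕ, ∀ p, 0 < p → ∀ S, HasFewCutPartition R S p ⌊ε * p + M⌋₊ := by
  obtain ⟨M, hM⟩ := h ε hε
  refine ⟨M + 1, fun p hp S => ?_⟩
  rcases S.eq_empty_or_nonempty with rfl | hS
  · exact ⟨Finpartition.empty _, by simp, by simp, by simp [cutNumber]⟩
  set t := (2 * #S + p - 1) / p with ht
  have hpt : 2 * #S ≤ p * t := by
    rw [ht, ← Nat.ceilDiv_eq_add_pred_div]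
    exact le_smul_ceilDiv hp
  have ht₀ : 0 < t := pos_of_mul_pos_right ((by simpa using hS : 0 < 2 * #S).trans_le hpt) p.zero_le
  obtain ⟨P, hP, hPu, hPq⟩ := hM S t ht₀
  obtain ⟨𝒬, h𝒬t, hP𝒬, hcard⟩ := hP.exists_finpartition ht₀
  have hsdiff : #(𝒬.parts \ P) + #P = #𝒬.parts := card_sdiff_add_card_eq_card hP𝒬
  refine ⟨𝒬, ?_, h𝒬t, fun q => Nat.le_floor ?_⟩
  · have hmul : (2 * #𝒬.parts) * t ≤ (p + 2) * t := by
      nlinarith [hP.card_mul_add_card_uncovered]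
    have := Nat.le_of_mul_le_mul_right hmul ht₀
    omega
  · have hcut : (cutNumber R q 𝒬.parts : ℝ) ≤ #(𝒬.parts \ P) + cutNumber R q P := by
      have hle := (cutNumber_union_le (R := R) (P := 𝒬.parts \ P) (F := P) q).trans
        (Nat.add_le_add_right (cutNumber_le_card q) _)
      rw [sdiff_union_of_subset hP𝒬] at hle
      exact_mod_cast hle
    have ht₀' : (0 : ℝ) < t := mod_cast ht₀
    have hcard' : (#(𝒬.parts \ P) : ℝ) * t ≤ #(uncovered S P) + t := mod_cast hcard
    have hpt' : ε * (2 * #S) ≤ ε * (p * t) := mul_le_mul_of_nonneg_left (mod_cast hpt) hε.le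
    refine hcut.trans (le_of_mul_le_mul_right ?_ ht₀')
    push_cast
    linarith [hPq q]

theorem HasFewCutPartition.exists_fin (h : HasFewCutPartition R S p c) :
    ∃ m ≤ p, ∃ T : Fin m → Finset α, (∀ i, T i ⊆ S) ∧ (∀ i j, i ≠ j → Disjoint (T i) (T j)) ∧
      (∀ x ∈ S, ∃ i, x ∈ T i) ∧ (∀ i, #(T i) ≤ (2 * #S + p - 1) / p) ∧
      ∀ q, {i | R q (T i)}.ncard ≤ c := by
  obtain ⟨𝒬, hp, hcard, hcut⟩ := h
  let T (i : Fin #𝒬.parts) : Finset α := 𝒬.parts.equivFin.symm i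
  have hT : Function.Injective T := Subtype.val_injective.comp (Equiv.injective _)
  have hT𝒬 (i) : T i ∈ 𝒬.parts := (𝒬.parts.equivFin.symm i).2
  refine ⟨#𝒬.parts, hp, T, fun i => 𝒬.le (hT𝒬 i),
    fun i j hij => 𝒬.disjoint (hT𝒬 i) (hT𝒬 j) (hT.ne hij), fun x hx => ?_,
    fun i => hcard _ (hT𝒬 i), fun q => ?_⟩
  · obtain ⟨A, hA, hxA⟩ := 𝒬.exists_mem hx
    exact ⟨𝒬.parts.equivFin ⟨A, hA⟩, by simpa [T] using hxA⟩
  · classical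
    refine le_trans ?_ (hcut q)
    refine le_of_le_of_eq ?_ (Set.ncard_coe_finset _)
    refine Set.ncard_le_ncard_of_injOn T (fun i hi => ?_) hT.injOn (finite_toSet _)
    exact mem_coe.2 (mem_filter.2 ⟨hT𝒬 i, hi⟩)

end Partitions

theorem tendsto_div_natCast_nhds_zero {u : ℕ → ℝ}
    (h : ∀ ε > 0, ∃ M : ℝ, ∀ p, 0 < p → |u p| ≤ ε * p + M) :
    Filter.Tendsto (fun p => u p / p) Filter.atTop (nhds 0) := by
  refine Asymptotics.IsLittleO.tendsto_div_nhds_zero (Asymptotics.isLittleO_iff.2 fun ε hε => ?_)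
  obtain ⟨M, hM⟩ := h (ε / 2) (half_pos hε)
  have hlarge := (tendsto_natCast_atTop_atTop (R := ℝ)).const_mul_atTop (half_pos hε)
  filter_upwards [hlarge.eventually_ge_atTop M, Filter.eventually_gt_atTop 0] with p hp hp₀
  rw [Real.norm_eq_abs, Real.norm_natCast]
  linarith [hM p hp₀]

theorem partition_few_cut_general {𝕜 E α : Type*} [Field 𝕜] [LinearOrder 𝕜] [IsStrictOrderedRing 𝕜]
    [AddCommGroup E] [Module 𝕜 E] [FiniteDimensional 𝕜 E] (Φ : E →ₗ[𝕜] α → 𝕜) :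
    ∃ f : ℕ → ℕ,
      Filter.Tendsto (fun p => (f p : ℝ) / p) Filter.atTop (nhds 0) ∧
      ∀ S : Finset α, ∀ p : ℕ, 0 < p →
        ∃ m ≤ p, ∃ T : Fin m → Finset α,
          (∀ i, T i ⊆ S) ∧
          (∀ i j, i ≠ j → Disjoint (T i) (T j)) ∧
          (∀ x ∈ S, ∃ i, x ∈ T i) ∧
          (∀ i, #(T i) ≤ (2 * #S + p - 1) / p) ∧
          ∀ e, {i | ChangesSignOn (Φ e) (T i)}.ncard ≤ f p := by
  classical
  let C (p : ℕ) : Set ℕ := {c | ∀ S, HasFewCutPartition (fun e => ChangesSignOn (Φ e)) S p c}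
  have hC {ε : ℝ} (hε : 0 < ε) : ∃ M : ℕ, ∀ p, 0 < p → ⌊ε * p + M⌋₊ ∈ C p :=
    (hasCutRatio_of_hasUncutFamily (by positivity) (hasUncutFamily_changesSignOn _ Φ le_rfl)
      (fun e => monotone_changesSignOn (Φ e)) hε).exists_hasFewCutPartition hε
  refine ⟨fun p => sInf (C p), tendsto_div_natCast_nhds_zero fun ε hε => ?_, fun S p hp => ?_⟩
  · obtain ⟨M, hM⟩ := hC hε
    refine ⟨M, fun p hp => ?_⟩
    rw [Nat.abs_cast]
    exact (Nat.cast_le.2 (Nat.sInf_le (hM p hp))).trans (Nat.floor_le (by positivity))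
  · obtain ⟨M, hM⟩ := hC one_pos
    exact (Nat.sInf_mem ⟨_, hM p hp⟩ S).exists_fin

/-- Evaluation of affine functionals, as a linear map into functions: it presents the affine
functionals as a finite-dimensional space of functions. -/
def affineEval (d : ℕ) : ((Fin d → ℝ) →ᵃ[ℝ] ℝ) →ₗ[ℝ] (Fin d → ℝ) → ℝ where
  toFun g := g
  map_add' _ _ := rfl
  map_smul' _ _ := rfl

/-- Partition theorem: for every `d ≥ 1` there is a function `f` with `f p / p → 0`
such that any finite set of `n` points in ℝ^d and any `p > 0` admit a partition into
at most `p` subsets, each of size at most `⌈2n / p⌉`, with every hyperplane cutting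
at most `f p` of the subsets. -/
theorem partition_few_cut (d : ℕ) (hd : 1 ≤ d) :
    ∃ f : ℕ → ℕ,
      Filter.Tendsto (fun p => (f p : ℝ) / p) Filter.atTop (nhds 0) ∧
      ∀ S : Finset (Fin d → ℝ), ∀ p : ℕ, 0 < p →
        ∃ m : ℕ, m ≤ p ∧
          ∃ T : Fin m → Finset (Fin d → ℝ),
            (∀ i, T i ⊆ S) ∧
            (∀ i j, i ≠ j → Disjoint (T i) (T j)) ∧
            (∀ x ∈ S, ∃ i, x ∈ T i) ∧
            (∀ i, (T i).card ≤ (2 * S.card + p - 1) / p) ∧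
            (∀ g : (Fin d → ℝ) →ᵃ[ℝ] ℝ, g.linear ≠ 0 →
              {i : Fin m | Cuts g (T i)}.ncard ≤ f p) := by
  obtain ⟨f, hf, h⟩ := partition_few_cut_general (affineEval d)
  refine ⟨f, hf, fun S p hp => ?_⟩
  obtain ⟨m, hm, T, hsub, hdisj, hcover, hcard, hcut⟩ := h S p hp
  exact ⟨m, hm, T, hsub, hdisj, hcover, hcard, fun g _ => hcut g⟩
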